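/- Let Dx, Dy > 0, set D = min{Dx, Dy}, and let g : ℝ → ℝ be a nonnegative antitone (nonincreasing) function on [0, ∞). Then the average of (x, y) ↦ g(√(x² + y²)) over the rectangle [−Dx/2, Dx/2] × [−Dy/2, Dy/2] (with respect to two-dimensional Lebesgue measure) is at most its average over the closed disc of radius D/2 centered at the origin. -/

import Mathlib

/-!
Write `f p = g (√(p.1² + p.2²))`, let `B` be the disc, `R ⊇ B` the rectangle and `c = g (D / 2)`.
Since `g` is nonincreasing, `f ≥ c` on `B` and `f ≤ c` off `B`. Hence passing from `B` to `R` only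
adjoins points where `f` is at most `c`, while the average over `B` is at least `c`, so the average
cannot increase. The general form of this argument is `setAverage_le_of_threshold`. Integrability
holds because `f` is bounded between `0` and `g 0`, and measurability because `g ∘ max 0` is antitone.
-/

open MeasureTheory

/-- Enlarging a set by points where `f` is at most a threshold `c` does not increase the average of
`f`, provided `f` is at least `c` on the original set. -/
theorem setAverage_le_of_threshold {α : Type*} [MeasurableSpace α] {μ : Measure α}
    {B R : Set α} {f : α → ℝ} {c : ℝ} (hB : MeasurableSet B) (hR : MeasurableSet R)
    (hBR : B ⊆ R) (hB0 : μ B ≠ 0) (hRfin : μ R ≠ ⊤) (hf : IntegrableOn f R μ)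
    (hlow : ∀ p ∈ B, c ≤ f p) (hup : ∀ p ∈ R \ B, f p ≤ c) :
    ⨍ p in R, f p ∂μ ≤ ⨍ p in B, f p ∂μ := by
  have hBfin : μ B ≠ ⊤ := measure_ne_top_of_subset hBR hRfin
  have hdfin : μ (R \ B) ≠ ⊤ := measure_ne_top_of_subset Set.sdiff_subset hRfin
  have hBpos : 0 < μ.real B := ENNReal.toReal_pos hB0 hBfin
  have hBRle : μ.real B ≤ μ.real R := measureReal_mono hBR hRfin
  have hRpos : 0 < μ.real R := hBpos.trans_le hBRle
  have hdiff : μ.real (R \ B) = μ.real R - μ.real B := measureReal_sdiff hBR hB hRfin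
  have hsplit : ∫ p in R \ B, f p ∂μ = ∫ p in R, f p ∂μ - ∫ p in B, f p ∂μ :=
    setIntegral_sdiff hB hf hBR
  have h1 : μ.real B * c ≤ ∫ p in B, f p ∂μ := by
    have := setIntegral_mono_on (integrableOn_const hBfin) (hf.mono_set hBR) hB hlow
    simpa using this
  have h2 : ∫ p in R \ B, f p ∂μ ≤ μ.real (R \ B) * c := by
    have := setIntegral_mono_on (hf.mono_set Set.sdiff_subset) (integrableOn_const hdfin)
      (hR.diff hB) hup
    simpa using this
  rw [setAverage_eq, setAverage_eq, smul_eq_mul, smul_eq_mul, inv_mul_eq_div, inv_mul_eq_div,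
    div_le_div_iff₀ hRpos hBpos]
  rw [hsplit, hdiff] at h2
  nlinarith [mul_le_mul_of_nonneg_right h2 hBpos.le,
    mul_le_mul_of_nonneg_right h1 (sub_nonneg.2 hBRle)]

/-- For a nonnegative nonincreasing function `g` on `[0, ∞)`, the average of
`(x, y) ↦ g(√(x² + y²))` over the rectangle `[−Dx/2, Dx/2] × [−Dy/2, Dy/2]` is at
most its average over the closed disc of radius `D/2` centered at the origin,
where `D = min{Dx, Dy}`. -/
theorem stmt_11 (Dx Dy : ℝ) (hDx : 0 < Dx) (hDy : 0 < Dy)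
    (D : ℝ) (hD : D = min Dx Dy)
    (g : ℝ → ℝ) (hg_nonneg : ∀ x ∈ Set.Ici (0 : ℝ), 0 ≤ g x)
    (hg_anti : AntitoneOn g (Set.Ici 0)) :
    ⨍ p in (Set.Icc (-(Dx / 2)) (Dx / 2) ×ˢ Set.Icc (-(Dy / 2)) (Dy / 2)),
        g (Real.sqrt (p.1 ^ 2 + p.2 ^ 2))
      ≤ ⨍ p in {p : ℝ × ℝ | Real.sqrt (p.1 ^ 2 + p.2 ^ 2) ≤ D / 2},
          g (Real.sqrt (p.1 ^ 2 + p.2 ^ 2)) := by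
  have hD0 : 0 < D / 2 := by rw [hD]; exact half_pos (lt_min hDx hDy)
  have hDDx : D ≤ Dx := hD ▸ min_le_left _ _
  have hDDy : D ≤ Dy := hD ▸ min_le_right _ _
  have hcont : Continuous fun p : ℝ × ℝ => Real.sqrt (p.1 ^ 2 + p.2 ^ 2) := by fun_prop
  have hmeas : Measurable fun p : ℝ × ℝ => g (Real.sqrt (p.1 ^ 2 + p.2 ^ 2)) := by
    -- `g` is unconstrained on negative reals, so it is replaced by the antitone `g ∘ max 0`.
    have hanti : Antitone fun t : ℝ => g (max 0 t) := fun a b hab =>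
      hg_anti (Set.mem_Ici.2 (le_max_left _ _)) (Set.mem_Ici.2 (le_max_left _ _))
        (max_le_max_left 0 hab)
    have := hanti.measurable.comp hcont.measurable
    simpa [Function.comp_def] using this
  have hRfin : volume (Set.Icc (-(Dx / 2)) (Dx / 2) ×ˢ Set.Icc (-(Dy / 2)) (Dy / 2)) ≠ ⊤ :=
    (isCompact_Icc.prod isCompact_Icc).measure_ne_top
  refine setAverage_le_of_threshold (c := g (D / 2)) (measurableSet_le hcont.measurable
    measurable_const) (measurableSet_Icc.prod measurableSet_Icc) ?_ ?_ hRfin ?_ ?_ ?_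
  · intro p hp
    have hx : |p.1| ≤ D / 2 := (Real.abs_le_sqrt (by nlinarith [sq_nonneg p.2])).trans hp
    have hy : |p.2| ≤ D / 2 := (Real.abs_le_sqrt (by nlinarith [sq_nonneg p.1])).trans hp
    rw [abs_le] at hx hy
    refine ⟨⟨?_, ?_⟩, ⟨?_, ?_⟩⟩ <;> linarith
  · -- The disc contains the open disc, which is nonempty and open.
    have hopen : IsOpen {p : ℝ × ℝ | Real.sqrt (p.1 ^ 2 + p.2 ^ 2) < D / 2} :=
      isOpen_lt hcont continuous_const
    have hpos := hopen.measure_pos volume ⟨(0, 0), by simpa using hD0⟩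
    exact (hpos.trans_le (measure_mono fun p hp => (Set.mem_setOf.1 hp).le)).ne'
  · refine IntegrableOn.of_bound hRfin.lt_top hmeas.aestronglyMeasurable (g 0) (ae_of_all _ ?_)
    intro p
    rw [Real.norm_of_nonneg (hg_nonneg _ (Real.sqrt_nonneg _))]
    exact hg_anti Set.self_mem_Ici (Real.sqrt_nonneg _) (Real.sqrt_nonneg _)
  · exact fun p hp => hg_anti (Real.sqrt_nonneg _) hD0.le hp
  · exact fun p hp => hg_anti hD0.le (Real.sqrt_nonneg _) (not_le.1 hp.2).le
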